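/- arXiv:1611.02537 — 5 statements merged into one kernel-verified Lean document; each statement's English description precedes it below -/
import Mathlib

section
/- (Induction invariant of Lemma 3) Let P be a semi-positive Datalog program, J an interpretation, k ≥ 1, and J₀, J₁, …, J_k a k-step derivation family for (P,J). Then for every 0 ≤ i ≤ k, the atoms derivable at level i under-approximate the i-fold iterate of the consequence operator on the extensional part of J: Jᵢ ⊆ T^i_{P, inp(P,J)}. -/
set_option autoImplicit false

namespace Datalog

universe u v w

variable {Preds : Type u} {Vars : Type v} {Vals : Type w} {ar : Preds → ℕ}

/-- A term is a variable or a value. -/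
inductive Term (Vars : Type v) (Vals : Type w) : Type (max v w) where
  | var : Vars → Term Vars Vals
  | val : Vals → Term Vars Vals

/-- An atom `p(t̄)` over terms. -/
structure Atom (Preds : Type u) (Vars : Type v) (Vals : Type w) (ar : Preds → ℕ) :
    Type (max u v w) where
  pred : Preds
  args : Fin (ar pred) → Term Vars Vals

/-- A literal: a positive or a negated atom. -/
inductive Lit (Preds : Type u) (Vars : Type v) (Vals : Type w) (ar : Preds → ℕ) :
    Type (max u v w) where
  | pos : Atom Preds Vars Vals ar → Lit Preds Vars Vals ar
  | neg : Atom Preds Vars Vals ar → Lit Preds Vars Vals ar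

def Lit.atom : Lit Preds Vars Vals ar → Atom Preds Vars Vals ar
  | .pos a => a
  | .neg a => a

def Lit.pred (l : Lit Preds Vars Vals ar) : Preds := l.atom.pred

def Lit.isPos : Lit Preds Vars Vals ar → Prop
  | .pos _ => True
  | .neg _ => False

def Lit.isNeg : Lit Preds Vars Vals ar → Prop
  | .pos _ => False
  | .neg _ => True

/-- A ground atom `p(v̄)`. -/
structure GAtom (Preds : Type u) (Vals : Type w) (ar : Preds → ℕ) : Type (max u w) where
  pred : Preds
  args : Fin (ar pred) → Vals

/-- An interpretation is a set of ground atoms. -/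
abbrev Interp (Preds : Type u) (Vals : Type w) (ar : Preds → ℕ) :=
  Set (GAtom Preds Vals ar)

def Atom.hasVar (a : Atom Preds Vars Vals ar) (x : Vars) : Prop :=
  ∃ i, a.args i = Term.var x

/-- A Datalog rule `a ← l₁,…,lₘ`: every variable in the head occurs in the body. -/
structure Rule (Preds : Type u) (Vars : Type v) (Vals : Type w) (ar : Preds → ℕ) :
    Type (max u v w) where
  head : Atom Preds Vars Vals ar
  body : List (Lit Preds Vars Vals ar)
  safe : ∀ x : Vars, head.hasVar x → ∃ l ∈ body, l.atom.hasVar x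

/-- A Datalog program: a finite set (list) of rules. -/
abbrev Program (Preds : Type u) (Vars : Type v) (Vals : Type w) (ar : Preds → ℕ) :=
  List (Rule Preds Vars Vals ar)

/-- Applying a substitution to a term. -/
def substT (σ : Vars → Vals) : Term Vars Vals → Vals
  | .var x => σ x
  | .val v => v

/-- `σ(a)`: grounding an atom by a substitution. -/
def Atom.ground (a : Atom Preds Vars Vals ar) (σ : Vars → Vals) : GAtom Preds Vals ar :=
  ⟨a.pred, fun i => substT σ (a.args i)⟩

/-- `A ⊢ σ(l)`. -/
def holds (A : Interp Preds Vals ar) (σ : Vars → Vals) : Lit Preds Vars Vals ar → Prop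
  | .pos a => a.ground σ ∈ A
  | .neg a => a.ground σ ∉ A

/-- The consequence operator `T_P`. -/
def T (P : Program Preds Vars Vals ar) (A : Interp Preds Vals ar) : Interp Preds Vals ar :=
  A ∪ { g | ∃ r ∈ P, ∃ σ : Vars → Vals, (∀ l ∈ r.body, holds A σ l) ∧ r.head.ground σ = g }

/-- `T^i_{P,I}`: iterates of the consequence operator. -/
def iter (P : Program Preds Vars Vals ar) (I : Interp Preds Vals ar) :
    ℕ → Interp Preds Vals ar
  | 0 => I
  | n + 1 => T P (iter P I n)

/-- The model `⟦P⟧_I = ⋃_{i≥0} T^i_{P,I}`. -/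
def model (P : Program Preds Vars Vals ar) (I : Interp Preds Vals ar) :
    Interp Preds Vals ar :=
  ⋃ n, iter P I n

/-- `p` is extensional for `P`: it occurs in no rule head. -/
def isEDB (P : Program Preds Vars Vals ar) (p : Preds) : Prop :=
  ∀ r ∈ P, r.head.pred ≠ p

/-- `p` is intensional for `P`: not extensional. -/
def isIDB (P : Program Preds Vars Vals ar) (p : Preds) : Prop := ¬ isEDB P p

/-- `inp(P, J)`: the extensional part of `J`. -/
def inp (P : Program Preds Vars Vals ar) (J : Interp Preds Vals ar) :
    Interp Preds Vals ar :=
  { a ∈ J | isEDB P a.pred }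

/-- An input for `P` contains only atoms over edb predicates. -/
def isInput (P : Program Preds Vars Vals ar) (I : Interp Preds Vals ar) : Prop :=
  ∀ a ∈ I, isEDB P a.pred

/-- `P` is semi-positive: negative body literals use only edb predicates. -/
def semiPositive (P : Program Preds Vars Vals ar) : Prop :=
  ∀ r ∈ P, ∀ a : Atom Preds Vars Vals ar, Lit.neg a ∈ r.body → isEDB P a.pred

/-- `J` is rule-closed for `P`. -/
def ruleClosed (P : Program Preds Vars Vals ar) (J : Interp Preds Vals ar) : Prop :=
  ∀ r ∈ P, ∀ σ : Vars → Vals, (∀ l ∈ r.body, holds J σ l) → r.head.ground σ ∈ J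

/-- Condition on a body literal in a k-step derivation family: a positive literal over an
idb predicate must have been derived at the previous level; otherwise (a literal over an
edb predicate) it must hold w.r.t. `J`. -/
def litStep (P : Program Preds Vars Vals ar) (J Fprev : Interp Preds Vals ar)
    (σ : Vars → Vals) : Lit Preds Vars Vals ar → Prop
  | .pos a => (isIDB P a.pred ∧ a.ground σ ∈ Fprev) ∨ (isEDB P a.pred ∧ a.ground σ ∈ J)
  | .neg a => a.ground σ ∉ J

/-- `F 0, F 1, …, F k` is a k-step derivation family for `(P, J)`. -/
def derivFamily (P : Program Preds Vars Vals ar) (J : Interp Preds Vals ar) (k : ℕ)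
    (F : ℕ → Interp Preds Vals ar) : Prop :=
  (∀ i ≤ k, ∀ a ∈ F i, isIDB P a.pred) ∧
  F 0 = ∅ ∧
  (∀ i, 1 ≤ i → i ≤ k → ∀ g : GAtom Preds Vals ar, isIDB P g.pred →
    (g ∈ F i ↔ ∃ r ∈ P, ∃ σ : Vars → Vals,
      r.head.ground σ = g ∧ ∀ l ∈ r.body, litStep P J (F (i - 1)) σ l))

/-- Monotone ground formulas: ground literals combined by ∧ and ∨. -/
inductive GForm (Preds : Type u) (Vals : Type w) (ar : Preds → ℕ) : Type (max u w) where
  | pos : GAtom Preds Vals ar → GForm Preds Vals ar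
  | neg : GAtom Preds Vals ar → GForm Preds Vals ar
  | conj : GForm Preds Vals ar → GForm Preds Vals ar → GForm Preds Vals ar
  | disj : GForm Preds Vals ar → GForm Preds Vals ar → GForm Preds Vals ar

/-- `A ⊨ φ`. -/
def sat (A : Interp Preds Vals ar) : GForm Preds Vals ar → Prop
  | .pos a => a ∈ A
  | .neg a => a ∉ A
  | .conj φ ψ => sat A φ ∧ sat A ψ
  | .disj φ ψ => sat A φ ∨ sat A ψ

/-- The k-rewriting of `φ` holds (w.r.t. `J` and the top level `Fk` of a derivation
family): positive idb literals are read in `Fk`, positive edb literals in `J`, and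
negative literals as non-membership in `J`. -/
def kRewrite (P : Program Preds Vars Vals ar) (J Fk : Interp Preds Vals ar) :
    GForm Preds Vals ar → Prop
  | .pos a => (isIDB P a.pred ∧ a ∈ Fk) ∨ (isEDB P a.pred ∧ a ∈ J)
  | .neg a => a ∉ J
  | .conj φ ψ => kRewrite P J Fk φ ∧ kRewrite P J Fk ψ
  | .disj φ ψ => kRewrite P J Fk φ ∨ kRewrite P J Fk ψ

/-- A positive property of interpretations. -/
def PositiveProp (φ : Interp Preds Vals ar → Prop) : Prop :=
  ∀ A A' : Interp Preds Vals ar, φ A → A ⊆ A' → φ A'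

/-- A negative property of interpretations. -/
def NegativeProp (φ : Interp Preds Vals ar → Prop) : Prop :=
  ∀ A A' : Interp Preds Vals ar, φ A → A' ⊆ A → φ A'

/-- `φ` contains only positive literals. -/
def onlyPos : GForm Preds Vals ar → Prop
  | .pos _ => True
  | .neg _ => False
  | .conj φ ψ => onlyPos φ ∧ onlyPos ψ
  | .disj φ ψ => onlyPos φ ∧ onlyPos ψ

/-- `φ` contains only negative literals. -/
def onlyNeg : GForm Preds Vals ar → Prop
  | .pos _ => False
  | .neg _ => True
  | .conj φ ψ => onlyNeg φ ∧ onlyNeg ψ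
  | .disj φ ψ => onlyNeg φ ∧ onlyNeg ψ

/-- The predicate `p` occurs in the program `P` (in a head or a body). -/
def occursIn (P : Program Preds Vars Vals ar) (p : Preds) : Prop :=
  ∃ r ∈ P, r.head.pred = p ∨ ∃ l ∈ r.body, l.pred = p

/-- All literals of `φ` use predicates occurring in `P`. -/
def formPredsIn (P : Program Preds Vars Vals ar) : GForm Preds Vals ar → Prop
  | .pos a => occursIn P a.pred
  | .neg a => occursIn P a.pred
  | .conj φ ψ => formPredsIn P φ ∧ formPredsIn P ψ
  | .disj φ ψ => formPredsIn P φ ∧ formPredsIn P ψ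

/-- `Ps 1, …, Ps n` is a stratification: whenever a predicate occurs in a positive
(resp. negative) body literal of a rule in stratum `i`, every rule with that head
predicate lies in a stratum `j ≤ i` (resp. `j < i`). -/
def stratifiedWith (Ps : ℕ → Program Preds Vars Vals ar) (n : ℕ) : Prop :=
  ∀ i, 1 ≤ i → i ≤ n → ∀ r ∈ Ps i, ∀ l ∈ r.body,
    ∀ j, 1 ≤ j → j ≤ n → ∀ r' ∈ Ps j, r'.head.pred = l.pred →
      (l.isPos → j ≤ i) ∧ (l.isNeg → j < i)

/-- The models `M₀ = I`, `Mᵢ = ⟦Pᵢ⟧_{M_{i-1}}` of the strata. -/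
def Msets (Ps : ℕ → Program Preds Vars Vals ar) (I : Interp Preds Vals ar) :
    ℕ → Interp Preds Vals ar
  | 0 => I
  | i + 1 => model (Ps (i + 1)) (Msets Ps I i)

theorem inp_sub_iter (P : Program Preds Vars Vals ar) (I : Interp Preds Vals ar) (n : ℕ) :
    I ⊆ iter P I n := by
  induction n with
  | zero => exact fun _ h => h
  | succ n ih => exact fun _ h => Or.inl (ih h)

theorem iter_edb_sub (P : Program Preds Vars Vals ar) (J : Interp Preds Vals ar) (n : ℕ) :
    ∀ g ∈ iter P (inp P J) n, isEDB P g.pred → g ∈ J := by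
  induction n with
  | zero => exact fun g h _ => h.1
  | succ n ih =>
    intro g h he
    rcases h with h | ⟨r, hr, σ, _, rfl⟩
    · exact ih g h he
    · exact absurd rfl (he r hr)

/-- induction invariant of Lemma 3: the levels of a k-step derivation
family under-approximate the iterates of the consequence operator on `inp(P,J)`. -/
theorem statement7 (P : Program Preds Vars Vals ar) (hP : semiPositive P)
    (J : Interp Preds Vals ar) (k : ℕ) (hk : 1 ≤ k)
    (F : ℕ → Interp Preds Vals ar) (hF : derivFamily P J k F) :
    ∀ i ≤ k, F i ⊆ iter P (inp P J) i := by
  obtain ⟨hidb, h0, hstep⟩ := hF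
  intro i
  induction i with
  | zero => intro _ g hg; rw [h0] at hg; exact absurd hg (Set.notMem_empty g)
  | succ n ih =>
    intro hn g hg
    obtain ⟨r, hr, σ, hσ, hb⟩ :=
      (hstep (n + 1) (Nat.succ_pos n) hn g (hidb _ hn g hg)).1 hg
    refine Or.inr ⟨r, hr, σ, ?_, hσ⟩
    intro l hl
    have hs := hb l hl
    cases l with
    | pos a =>
      rcases hs with ⟨_, h⟩ | ⟨he, h⟩
      · exact ih (Nat.le_of_succ_le hn) h
      · exact inp_sub_iter P _ n ⟨h, he⟩
    | neg a => exact fun h => hs (iter_edb_sub P J n _ h (hP r hr a hl))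

end Datalog
end

section
/- (Lemmas 3 and 4, soundness for positive constraints) Let P be a semi-positive Datalog program, J an interpretation, k ≥ 1, and J₀, J₁, …, J_k a k-step derivation family for (P,J). Then every ground atom p(v̄) ∈ J_k belongs to the model of P on the extensional part of J: p(v̄) ∈ ⟦P⟧_{inp(P,J)}. -/
set_option autoImplicit false

namespace Datalog

universe u v w

variable {Preds : Type u} {Vars : Type v} {Vals : Type w} {ar : Preds → ℕ}

theorem iter_edb (P : Program Preds Vars Vals ar) (I : Interp Preds Vals ar) (n : ℕ)
    (g : GAtom Preds Vals ar) (hg : isEDB P g.pred) (h : g ∈ iter P I n) : g ∈ I := by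
  induction n with
  | zero => exact h
  | succ n ih =>
    rcases h with h | ⟨r, hr, σ, _, rfl⟩
    · exact ih h
    · exact absurd rfl (hg r hr)

/-- Lemmas 3 and 4, soundness for positive constraints: every atom in the
top level `F k` of a k-step derivation family belongs to `⟦P⟧_{inp(P,J)}`. -/
theorem statement8 (P : Program Preds Vars Vals ar) (hP : semiPositive P)
    (J : Interp Preds Vals ar) (k : ℕ) (hk : 1 ≤ k)
    (F : ℕ → Interp Preds Vals ar) (hF : derivFamily P J k F) :
    ∀ g ∈ F k, g ∈ model P (inp P J) := by
  have key : ∀ i, i ≤ k → F i ⊆ iter P (inp P J) i := by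
    intro i
    induction i with
    | zero =>
      intro _ g hg
      rw [hF.2.1] at hg
      exact absurd hg (Set.notMem_empty g)
    | succ i ih =>
      intro hi g hg
      obtain ⟨r, hr, σ, hh, hb⟩ :=
        (hF.2.2 (i + 1) (Nat.le_add_left 1 i) hi g (hF.1 _ hi g hg)).1 hg
      refine Or.inr ⟨r, hr, σ, ?_, hh⟩
      intro l hl
      have h1 := hb l hl
      cases l with
      | pos a =>
        rcases h1 with ⟨_, h2⟩ | ⟨h2, h3⟩
        · exact ih (Nat.le_of_succ_le hi) h2
        · exact inp_sub_iter P _ i ⟨h3, h2⟩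
      | neg a =>
        intro h2
        exact h1 (iter_edb P _ i _ (hP r hr a hl) h2).1
  intro g hg
  exact Set.mem_iUnion.2 ⟨k, key k le_rfl hg⟩

end Datalog
end

section
/- (Theorem 1, soundness of input synthesis for semi-positive Datalog) Let P be a semi-positive Datalog program, J an interpretation, k ≥ 1, and J₀, J₁, …, J_k a k-step derivation family for (P,J). Let φ be a monotone ground formula. If J is rule-closed for P and the k-rewriting of φ (with respect to J and J_k) holds, then ⟦P⟧_{inp(P,J)} ⊨ φ. -/
set_option autoImplicit false

namespace Datalog

universe u v w

variable {Preds : Type u} {Vars : Type v} {Vals : Type w} {ar : Preds → ℕ}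

theorem inp_subset_iter (P : Program Preds Vars Vals ar) (J : Interp Preds Vals ar) (n : ℕ) :
    inp P J ⊆ iter P (inp P J) n := by
  induction n with
  | zero => exact fun _ h => h
  | succ n ih => exact fun _ h => Or.inl (ih h)

theorem iter_subset (P : Program Preds Vars Vals ar) (hP : semiPositive P)
    (J : Interp Preds Vals ar) (hJ : ruleClosed P J) (n : ℕ) :
    iter P (inp P J) n ⊆ J := by
  induction n with
  | zero => exact fun _ h => h.1
  | succ n ih =>
    rintro g (h | ⟨r, hr, σ, hb, rfl⟩)
    · exact ih h
    · refine hJ r hr σ fun l hl => ?_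
      have hh := hb l hl
      cases l with
      | pos a => exact ih hh
      | neg a => exact fun hin => hh (inp_subset_iter P J n ⟨hin, hP r hr a hl⟩)

theorem family_subset (P : Program Preds Vars Vals ar) (hP : semiPositive P)
    (J : Interp Preds Vals ar) (k : ℕ)
    (F : ℕ → Interp Preds Vals ar) (hF : derivFamily P J k F)
    (hJ : ruleClosed P J) (n : ℕ) (hn : n ≤ k) :
    F n ⊆ iter P (inp P J) n := by
  induction n with
  | zero => rw [hF.2.1]; exact fun _ h => h.elim
  | succ n ih =>
    intro g hg
    obtain ⟨r, hr, σ, hg', hb⟩ :=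
      (hF.2.2 (n + 1) (by omega) hn g (hF.1 _ hn g hg)).1 hg
    refine Or.inr ⟨r, hr, σ, fun l hl => ?_, hg'⟩
    have hh := hb l hl
    cases l with
    | pos a =>
      rcases hh with ⟨_, h⟩ | ⟨he, h⟩
      · exact ih (by omega) h
      · exact inp_subset_iter P J n ⟨h, he⟩
    | neg a => exact fun hin => hh (iter_subset P hP J hJ n hin)

/-- Theorem 1, soundness of input synthesis for semi-positive Datalog:
if `J` is rule-closed for `P` and the k-rewriting of `φ` holds, then
`⟦P⟧_{inp(P,J)} ⊨ φ`. -/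
theorem statement10 (P : Program Preds Vars Vals ar) (hP : semiPositive P)
    (J : Interp Preds Vals ar) (k : ℕ) (hk : 1 ≤ k)
    (F : ℕ → Interp Preds Vals ar) (hF : derivFamily P J k F)
    (φ : GForm Preds Vals ar)
    (hJ : ruleClosed P J) (hφ : kRewrite P J (F k) φ) :
    sat (model P (inp P J)) φ := by
  induction φ with
  | pos a =>
    rcases hφ with ⟨_, h⟩ | ⟨he, h⟩
    · exact Set.mem_iUnion.2 ⟨k, family_subset P hP J k F hF hJ k le_rfl h⟩
    · exact Set.mem_iUnion.2 ⟨0, h, he⟩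
  | neg a =>
    intro hin
    obtain ⟨n, hn⟩ := Set.mem_iUnion.1 hin
    exact hφ (iter_subset P hP J hJ n hn)
  | conj φ ψ ih1 ih2 => exact ⟨ih1 hφ.1, ih2 hφ.2⟩
  | disj φ ψ ih1 ih2 => exact hφ.imp ih1 ih2

end Datalog
end

section
/- (Completeness of bounded unrolling) Let P be a semi-positive Datalog program, I an input for P, and k ≥ 1 such that T^k_{P,I} = ⟦P⟧_I. Set J = ⟦P⟧_I and, for 0 ≤ i ≤ k, Jᵢ = the set of atoms of T^i_{P,I} over idb predicates of P. Then: (i) J₀, J₁, …, J_k is a k-step derivation family for (P,J); (ii) J is rule-closed for P; (iii) inp(P,J) = I; and (iv) for every monotone ground formula φ with ⟦P⟧_I ⊨ φ, the k-rewriting of φ (with respect to J and J_k) holds. -/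
set_option autoImplicit false

namespace Datalog

universe u v w

variable {Preds : Type u} {Vars : Type v} {Vals : Type w} {ar : Preds → ℕ}

theorem edb_iter (P : Program Preds Vars Vals ar) (I : Interp Preds Vals ar) (n : ℕ)
    (g : GAtom Preds Vals ar) (hg : isEDB P g.pred) : g ∈ iter P I n ↔ g ∈ I := by
  induction n with
  | zero => exact Iff.rfl
  | succ n ih =>
    constructor
    · rintro (h | ⟨r, hr, σ, -, rfl⟩)
      · exact ih.1 h
      · exact absurd rfl (hg r hr)
    · intro h
      exact Or.inl (ih.2 h)

theorem edb_model (P : Program Preds Vars Vals ar) (I : Interp Preds Vals ar)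
    (g : GAtom Preds Vals ar) (hg : isEDB P g.pred) : g ∈ model P I ↔ g ∈ I := by
  simp [model, edb_iter P I _ g hg]

theorem holds_iff_litStep (P : Program Preds Vars Vals ar) (hP : semiPositive P)
    (I : Interp Preds Vals ar) (n : ℕ) (r : Rule Preds Vars Vals ar) (hr : r ∈ P)
    (σ : Vars → Vals) (l : Lit Preds Vars Vals ar) (hl : l ∈ r.body) :
    holds (iter P I n) σ l ↔
      litStep P (model P I) { a ∈ iter P I n | isIDB P a.pred } σ l := by
  cases l with
  | pos a =>
    by_cases h : isEDB P a.pred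
    · have h1 := edb_iter P I n (a.ground σ) h
      have h2 := edb_model P I (a.ground σ) h
      simp [holds, litStep, isIDB, h, h1, h2]
    · have h' : ¬ isEDB P (a.ground σ).pred := h
      simp [holds, litStep, isIDB, h, h']
  | neg a =>
    have h := hP r hr a hl
    have h1 := edb_iter P I n (a.ground σ) h
    have h2 := edb_model P I (a.ground σ) h
    simp [holds, litStep, h1, h2]

theorem litStep_mono (P : Program Preds Vars Vals ar) (J F G : Interp Preds Vals ar)
    (h : F ⊆ G) (σ : Vars → Vals) (l : Lit Preds Vars Vals ar)
    (hl : litStep P J F σ l) : litStep P J G σ l := by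
  cases l with
  | pos a => exact hl.imp (fun x => ⟨x.1, h x.2⟩) id
  | neg a => exact hl

theorem derive_succ (P : Program Preds Vars Vals ar) (hP : semiPositive P)
    (I : Interp Preds Vals ar) (hI : isInput P I) (n : ℕ) (g : GAtom Preds Vals ar)
    (hg : isIDB P g.pred) (h : g ∈ iter P I (n + 1)) :
    ∃ r ∈ P, ∃ σ : Vars → Vals, r.head.ground σ = g ∧ ∀ l ∈ r.body,
      litStep P (model P I) { a ∈ iter P I n | isIDB P a.pred } σ l := by
  induction n with
  | zero =>
    rcases h with h | ⟨r, hr, σ, hb, he⟩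
    · exact absurd (hI g h) hg
    · exact ⟨r, hr, σ, he, fun l hl => (holds_iff_litStep P hP I 0 r hr σ l hl).1 (hb l hl)⟩
  | succ n ih =>
    rcases h with h | ⟨r, hr, σ, hb, he⟩
    · obtain ⟨r, hr, σ, he, hb⟩ := ih h
      refine ⟨r, hr, σ, he, fun l hl => litStep_mono P _ _ _ ?_ σ l (hb l hl)⟩
      rintro a ⟨ha, hi⟩
      exact ⟨Or.inl ha, hi⟩
    · exact ⟨r, hr, σ, he,
        fun l hl => (holds_iff_litStep P hP I (n + 1) r hr σ l hl).1 (hb l hl)⟩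

/-- completeness of bounded unrolling. -/
theorem statement11 (P : Program Preds Vars Vals ar) (hP : semiPositive P)
    (I : Interp Preds Vals ar) (hI : isInput P I)
    (k : ℕ) (hk : 1 ≤ k) (hfix : iter P I k = model P I) :
    derivFamily P (model P I) k (fun i => { a ∈ iter P I i | isIDB P a.pred }) ∧
    ruleClosed P (model P I) ∧
    inp P (model P I) = I ∧
    (∀ φ : GForm Preds Vals ar, sat (model P I) φ →
      kRewrite P (model P I) { a ∈ iter P I k | isIDB P a.pred } φ) := by
  refine ⟨⟨fun i _ a ha => ha.2, ?_, ?_⟩, ?_, ?_, ?_⟩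
  · ext a
    simp only [Set.mem_setOf_eq, Set.mem_empty_iff_false, iff_false]
    rintro ⟨ha, hi⟩
    exact hi (hI a ha)
  · intro i hi _ g hg
    obtain ⟨n, rfl⟩ : ∃ n, i = n + 1 := ⟨i - 1, by omega⟩
    constructor
    · intro h
      exact derive_succ P hP I hI n g hg h.1
    · rintro ⟨r, hr, σ, he, hb⟩
      exact ⟨Or.inr ⟨r, hr, σ,
        fun l hl => (holds_iff_litStep P hP I n r hr σ l hl).2 (hb l hl), he⟩, hg⟩
  · intro r hr σ hb
    rw [← hfix] at hb
    exact Set.mem_iUnion.2 ⟨k + 1, Or.inr ⟨r, hr, σ, hb, rfl⟩⟩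
  · ext a
    constructor
    · rintro ⟨h, he⟩
      exact (edb_model P I a he).1 h
    · intro h
      exact ⟨(edb_model P I a (hI a h)).2 h, hI a h⟩
  · intro φ
    induction φ with
    | pos a =>
      intro h
      by_cases he : isEDB P a.pred
      · exact Or.inr ⟨he, h⟩
      · refine Or.inl ⟨he, ?_, he⟩
        rw [hfix]
        exact h
    | neg a => exact fun h => h
    | conj φ ψ h1 h2 => exact fun h => ⟨h1 h.1, h2 h.2⟩
    | disj φ ψ h1 h2 => exact fun h => h.imp h1 h2

end Datalog
end

section
/- Let P be a Datalog program that is stratified with strata P₁,…,Pₙ, let I be an input for P, and let M₀ = I and Mᵢ = ⋃_{j≥0} T^j_{Pᵢ, M_{i−1}} for 1 ≤ i ≤ n. Then for every 0 ≤ i ≤ n and every ground atom p(v̄) such that p is not an idb predicate of the program P_{i+1} ∪ … ∪ Pₙ, we have p(v̄) ∈ Mₙ if and only if p(v̄) ∈ Mᵢ; that is, higher strata do not add atoms over predicates defined at or below stratum i. -/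
set_option autoImplicit false

namespace Datalog

universe u v w

variable {Preds : Type u} {Vars : Type v} {Vals : Type w} {ar : Preds → ℕ}

theorem mem_model_of_not_head (Q : Program Preds Vars Vals ar) (J : Interp Preds Vals ar)
    (g : GAtom Preds Vals ar) (h : ∀ r ∈ Q, r.head.pred ≠ g.pred) :
    g ∈ model Q J ↔ g ∈ J := by
  constructor
  · intro hm
    obtain ⟨k, hk⟩ := Set.mem_iUnion.mp hm
    induction k with
    | zero => exact hk
    | succ k ih =>
      rcases hk with hk | ⟨r, hr, σ, _, he⟩
      · exact ih hk
      · exact absurd (congrArg GAtom.pred he) (h r hr)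
  · intro hJ
    exact Set.mem_iUnion.mpr ⟨0, hJ⟩

/-- higher strata do not add atoms over predicates that are not idb
predicates of the union of the strata above `i`. -/
theorem statement12 (Ps : ℕ → Program Preds Vars Vals ar) (n : ℕ) (hn : 1 ≤ n)
    (P : Program Preds Vars Vals ar)
    (hP : ∀ r, r ∈ P ↔ ∃ i, 1 ≤ i ∧ i ≤ n ∧ r ∈ Ps i)
    (hstrat : stratifiedWith Ps n)
    (I : Interp Preds Vals ar) (hI : isInput P I)
    (i : ℕ) (hi : i ≤ n)
    (g : GAtom Preds Vals ar)
    (hg : ∀ j, i < j → j ≤ n → ∀ r ∈ Ps j, r.head.pred ≠ g.pred) :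
    (g ∈ Msets Ps I n ↔ g ∈ Msets Ps I i) := by
  clear hP hI hstrat hn
  induction n, hi using Nat.le_induction with
  | base => exact Iff.rfl
  | succ k hk ih =>
    have h1 : g ∈ Msets Ps I (k + 1) ↔ g ∈ Msets Ps I k :=
      mem_model_of_not_head _ _ g (hg (k + 1) (by omega) le_rfl)
    exact h1.trans (ih (fun j hj hjk => hg j hj (by omega)))

end Datalog
end
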